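/- Let N be a finite ground set, let f : 2^N → ℝ be non-negative, monotone and submodular, let k ≥ 1 be an integer, and let ε ∈ (0, 1). Let S, O ⊆ N with |O| ≤ k, and suppose that for every e ∈ N \ S the marginal gain satisfies Δ(e|S) < ε·f(O)/k. Then f(S) ≥ (1 − ε)·f(O). -/

import Mathlib

/-- A set function `f` on finite subsets of `α` is submodular if for all `A ⊆ B` and
`x ∉ B`, the marginal gain of `x` to `A` is at least the marginal gain of `x` to `B`. -/
def Submodular {α : Type*} [DecidableEq α] (f : Finset α → ℝ) : Prop :=
  ∀ A B : Finset α, A ⊆ B → ∀ x ∉ B, f (insert x A) - f A ≥ f (insert x B) - f B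

/-- Let `f` be non-negative, monotone and submodular, `k ≥ 1`,
`ε ∈ (0,1)`, and `S, O` with `|O| ≤ k`. If every `e ∈ N \ S` has marginal gain
`Δ(e|S) < ε·f(O)/k`, then `f(S) ≥ (1 − ε)·f(O)`. -/
theorem stmt8 {α : Type*} [DecidableEq α] (f : Finset α → ℝ)
    (hnn : ∀ A : Finset α, 0 ≤ f A)
    (hmono : ∀ A B : Finset α, A ⊆ B → f A ≤ f B)
    (hsub : Submodular f)
    (k : ℕ) (hk : 1 ≤ k) (ε : ℝ) (hε : 0 < ε) (hε1 : ε < 1)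
    (S O : Finset α) (hO : O.card ≤ k)
    (h : ∀ e : α, e ∉ S → f (insert e S) - f S < ε * f O / k) :
    (1 - ε) * f O ≤ f S := by
  have hk' : (0 : ℝ) < k := by exact_mod_cast hk
  have hd : 0 ≤ ε * f O / k := by
    have := hnn O
    positivity
  have key : ∀ T : Finset α, f (S ∪ T) ≤ f S + T.card * (ε * f O / k) := by
    intro T
    induction T using Finset.induction_on with
    | empty => simp
    | insert a T ha ih =>
      rw [Finset.card_insert_of_notMem ha, Finset.union_insert]
      push_cast
      by_cases hm : a ∈ S ∪ T
      · rw [Finset.insert_eq_of_mem hm]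
        linarith
      · have h1 := hsub S (S ∪ T) Finset.subset_union_left a hm
        have h2 := h a (fun hs => hm (Finset.mem_union_left _ hs))
        linarith
  have h1 := key O
  have h2 := hmono O (S ∪ O) Finset.subset_union_right
  have h3 : (O.card : ℝ) * (ε * f O / k) ≤ k * (ε * f O / k) :=
    mul_le_mul_of_nonneg_right (by exact_mod_cast hO) hd
  have h4 : (k : ℝ) * (ε * f O / k) = ε * f O := by field_simp
  linarith
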